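/- For every positive integer n there exists a word of length n over a 3-letter alphabet that avoids abelian 4-powers cyclically. (In particular, A(3) ≤ 4.) -/

import Mathlib

/-- `u` is an abelian `N`-power of period `m`: a concatenation of `N` nonempty
pairwise abelian-equivalent words of common length `m`. -/
def IsAbelianPower {α : Type*} (N m : ℕ) (u : List α) : Prop :=
  0 < m ∧ ∃ f : Fin N → List α,
    u = (List.ofFn f).flatten ∧ (∀ i, (f i).length = m) ∧ ∀ i j, List.Perm (f i) (f j)

/-- `u` occurs in the infinite word `w^ω`, i.e. `u` is a factor of `w^k` for some `k`. -/
def OccursCyc {α : Type*} (w u : List α) : Prop :=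
  ∃ k : ℕ, u <:+: (List.replicate k w).flatten

/-- `w` avoids abelian `N`-powers cyclically: every abelian `N`-power of period `m`
occurring in `w^ω` satisfies `m ≥ |w|`. -/
def AvoidsAbelianCyc {α : Type*} (N : ℕ) (w : List α) : Prop :=
  ∀ m u, IsAbelianPower N m u → OccursCyc w u → w.length ≤ m

/-- Dekking's morphism `a ↦ abb`, `b ↦ aaab` on letters. -/
def dekLetter (b : Bool) : List Bool :=
  if b then [true, false, false] else [true, true, true, false]

/-- Dekking's morphism on words. -/
def dek : List Bool → List Bool
  | [] => []
  | b :: v => dekLetter b ++ dek v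

/-- number of `true` in the prefix of length `i` -/
def pc (v : List Bool) (i : ℕ) : ℕ := (v.take i).count true

/-- abelian 4-power freeness, expressed by prefix counts -/
def Free4 (v : List Bool) : Prop :=
  ∀ p m d : ℕ, 0 < m → p + 4 * m ≤ v.length → pc v (p + m) = pc v p + d →
    pc v (p + 2 * m) = pc v p + 2 * d → pc v (p + 3 * m) = pc v p + 3 * d →
    pc v (p + 4 * m) = pc v p + 4 * d → False

lemma pc_mono (v : List Bool) (i e : ℕ) : pc v i ≤ pc v (i + e) ∧ pc v (i + e) ≤ pc v i + e := by
  unfold pc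
  rw [List.take_add, List.count_append]
  have h := List.count_le_length (a := true) (l := (v.drop i).take e)
  have := List.length_take_le e (v.drop i)
  omega

lemma pc_cons_succ (b : Bool) (v : List Bool) (i : ℕ) :
    pc (b :: v) (i + 1) = pc v i + (if b then 1 else 0) := by
  unfold pc
  cases b <;> simp

lemma pc_zero (v : List Bool) : pc v 0 = 0 := by simp [pc]

lemma cut (v : List Bool) : ∀ k, k ≤ (dek v).length → ∃ j, j ≤ v.length ∧
    ((k + pc v j = 4 * j ∧ pc (dek v) k + 2 * pc v j = 3 * j) ∨
     (k + pc v j = 4 * j + 1 ∧ pc (dek v) k + 2 * pc v j = 3 * j + 1) ∨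
     (k + pc v j = 4 * j + 2 ∧ pc (dek v) k + 2 * pc v j = 3 * j + 2) ∨
     (k + 1 + pc v j = 4 * j ∧ pc (dek v) k + 2 * pc v j = 3 * j)) := by
  induction v with
  | nil =>
    intro k hk
    simp only [dek, List.length_nil, Nat.le_zero] at hk
    subst hk
    exact ⟨0, le_refl _, by simp [pc_zero]⟩
  | cons b v ih =>
    intro k hk
    cases b with
    | true =>
      have e : dek (true :: v) = true :: false :: false :: dek v := rfl
      rw [e] at hk ⊢
      match k, hk with
      | 0, _ => exact ⟨0, by simp, by simp [pc_zero]⟩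
      | 1, _ => exact ⟨0, by simp, by simp [pc_zero, pc_cons_succ _ _ 0]⟩
      | 2, _ => exact ⟨1, by simp, by
          simp [pc_zero, pc_cons_succ _ _ 0, pc_cons_succ _ _ 1]⟩
      | k + 3, hk =>
        obtain ⟨j, hj, h⟩ := ih k (by simpa using hk)
        refine ⟨j + 1, by simpa using hj, ?_⟩
        simp only [pc_cons_succ, if_true, Bool.false_eq_true, if_false]
        omega
    | false =>
      have e : dek (false :: v) = true :: true :: true :: false :: dek v := rfl
      rw [e] at hk ⊢
      match k, hk with
      | 0, _ => exact ⟨0, by simp, by simp [pc_zero]⟩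
      | 1, _ => exact ⟨0, by simp, by simp [pc_zero, pc_cons_succ _ _ 0]⟩
      | 2, _ => exact ⟨0, by simp, by
          simp [pc_zero, pc_cons_succ _ _ 0, pc_cons_succ _ _ 1]⟩
      | 3, _ => exact ⟨1, by simp, by
          simp [pc_zero, pc_cons_succ _ _ 0, pc_cons_succ _ _ 1, pc_cons_succ _ _ 2]⟩
      | k + 4, hk =>
        obtain ⟨j, hj, h⟩ := ih k (by simpa using hk)
        refine ⟨j + 1, by simpa using hj, ?_⟩
        simp only [pc_cons_succ, if_true, Bool.false_eq_true, if_false]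
        omega

lemma dek_free (v : List Bool) (hv : Free4 v) : Free4 (dek v) := by
  intro p m d hm hp h1 h2 h3 h4
  obtain ⟨j0, l0, c0⟩ := cut v p (by omega)
  obtain ⟨j1, l1, c1⟩ := cut v (p + m) (by omega)
  obtain ⟨j2, l2, c2⟩ := cut v (p + 2 * m) (by omega)
  obtain ⟨j3, l3, c3⟩ := cut v (p + 3 * m) (by omega)
  obtain ⟨j4, l4, c4⟩ := cut v (p + 4 * m) hp
  rw [h1] at c1
  rw [h2] at c2
  rw [h3] at c3
  rw [h4] at c4
  clear h1 h2 h3 h4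
  have key : ∃ e x : ℤ, (j1 : ℤ) = j0 + e ∧ (j2 : ℤ) = j0 + 2 * e ∧ (j3 : ℤ) = j0 + 3 * e ∧
      (j4 : ℤ) = j0 + 4 * e ∧ (pc v j1 : ℤ) = pc v j0 + x ∧ (pc v j2 : ℤ) = pc v j0 + 2 * x ∧
      (pc v j3 : ℤ) = pc v j0 + 3 * x ∧ (pc v j4 : ℤ) = pc v j0 + 4 * x ∧
      (m : ℤ) = 4 * e - x := by
    refine ⟨(j1 : ℤ) - j0, (pc v j1 : ℤ) - pc v j0, ?_⟩
    generalize pc v j0 = a0 at *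
    generalize pc v j1 = a1 at *
    generalize pc v j2 = a2 at *
    generalize pc v j3 = a3 at *
    generalize pc v j4 = a4 at *
    generalize pc (dek v) p = A at *
    clear hv hp l0 l1 l2 l3 l4 hm
    rcases c0 with c0 | c0 | c0 | c0 <;> rcases c1 with c1 | c1 | c1 | c1 <;>
    rcases c2 with c2 | c2 | c2 | c2 <;> first | (exfalso; omega) | skip
    all_goals rcases c3 with c3 | c3 | c3 | c3 <;> first | (exfalso; omega) | skip
    all_goals rcases c4 with c4 | c4 | c4 | c4 <;> first | (exfalso; omega) | skip
    all_goals omega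
  obtain ⟨e, x, e1, e2, e3, e4, x1, x2, x3, x4, hme⟩ := key
  have he : 0 < e := by
    by_contra hneg
    have := pc_mono v j1 (j0 - j1)
    rw [show j1 + (j0 - j1) = j0 by omega] at this
    omega
  lift e to ℕ using he.le
  obtain rfl : j1 = j0 + e := by omega
  obtain rfl : j2 = j0 + 2 * e := by omega
  obtain rfl : j3 = j0 + 3 * e := by omega
  obtain rfl : j4 = j0 + 4 * e := by omega
  have := pc_mono v j0 e
  lift x to ℕ using (by omega)
  exact hv j0 e x (by omega) l4 (by omega) (by omega) (by omega) (by omega)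

lemma free_take (v : List Bool) (hv : Free4 v) (n : ℕ) : Free4 (v.take n) := by
  intro p m d hm hp h1 h2 h3 h4
  rw [List.length_take] at hp
  have H : ∀ i, i ≤ n → pc (v.take n) i = pc v i := by
    intro i hi
    unfold pc
    rw [List.take_take, min_eq_left hi]
  rw [H _ (by omega), H _ (by omega)] at h1 h2 h3 h4
  exact hv p m d hm (by omega) h1 h2 h3 h4

lemma dek_length (v : List Bool) : 3 * v.length ≤ (dek v).length := by
  induction v with
  | nil => simp [dek]
  | cons b v ih => cases b <;> simp [dek, dekLetter] <;> omega

lemma exists_free (n : ℕ) : ∃ v, v.length = n ∧ Free4 v := by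
  have : ∀ k : ℕ, ∃ v, k < v.length ∧ Free4 v := by
    intro k
    induction k with
    | zero =>
      refine ⟨[true], by simp, ?_⟩
      intro p m d hm hp
      simp at hp
      omega
    | succ k ih =>
      obtain ⟨v, h, hv⟩ := ih
      exact ⟨dek v, by have := dek_length v; omega, dek_free v hv⟩
  obtain ⟨v, h, hv⟩ := this n
  exact ⟨v.take n, by simp; omega, free_take v hv n⟩

lemma count_take_rep (w : List (Fin 3)) (c : Fin 3) (hw : 0 < w.length) (k : ℕ) :
    ∀ i, i ≤ k * w.length → ((List.replicate k w).flatten.take i).count c =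
      (i / w.length) * w.count c + (w.take (i % w.length)).count c := by
  induction k with
  | zero =>
    intro i hi
    obtain rfl : i = 0 := by simpa using hi
    simp
  | succ k ih =>
    intro i hi
    rw [List.replicate_succ, List.flatten_cons, List.take_append, List.count_append]
    rcases lt_or_ge i w.length with h | h
    · rw [Nat.div_eq_of_lt h, Nat.mod_eq_of_lt h, Nat.sub_eq_zero_of_le h.le]
      simp
    · obtain ⟨t, rfl⟩ := Nat.exists_eq_add_of_le h
      rw [List.take_of_length_le h, Nat.add_sub_cancel_left, ih t (by rw [add_mul] at hi; omega),
        Nat.add_div_left _ hw, Nat.add_mod_left, Nat.succ_mul]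
      omega

/-- encoding into three letters -/
def enc (b : Bool) : Fin 3 := if b then 0 else 1

lemma count_enc (v : List Bool) : (v.map enc).count 0 = v.count true := by
  induction v with
  | nil => simp
  | cons b v ih => cases b <;> simp [enc, ih]

lemma count_enc2 (v : List Bool) : (v.map enc).count 2 = 0 := by
  induction v with
  | nil => simp
  | cons b v ih => cases b <;> simp [enc, ih]

theorem ternary_avoids_abelian_4_powers_cyclically :
    ∀ n : ℕ, 0 < n → ∃ w : List (Fin 3), w.length = n ∧ AvoidsAbelianCyc 4 w := by
  intro n hn
  obtain ⟨v, hvl, hv⟩ := exists_free (n - 1)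
  have hwl : (v.map enc ++ [2]).length = n := by simp; omega
  refine ⟨v.map enc ++ [2], hwl, ?_⟩
  rintro m u ⟨hm, f, hu, hfl, hfp⟩ ⟨k, s, t, hst⟩
  rw [hwl]
  by_contra hmn
  push Not at hmn
  set w := v.map enc ++ [2] with hw
  set W := (List.replicate k w).flatten with hW
  have hu' : u = f 0 ++ f 1 ++ f 2 ++ f 3 := by
    rw [hu]; simp [List.ofFn_succ]
  have hWl : W.length = k * n := by rw [hW]; simp [hwl]
  have hlen : s.length + 4 * m ≤ k * n := by
    rw [← hWl, ← hst, hu']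
    simp only [List.length_append, hfl]
    omega
  -- letters 0 and 2: prefix counts form arithmetic progressions
  have hc : ∀ c : Fin 3, ∃ d, (W.take (s.length + m)).count c = (W.take s.length).count c + d ∧
      (W.take (s.length + 2 * m)).count c = (W.take s.length).count c + 2 * d ∧
      (W.take (s.length + 3 * m)).count c = (W.take s.length).count c + 3 * d ∧
      (W.take (s.length + 4 * m)).count c = (W.take s.length).count c + 4 * d := by
    intro c
    refine ⟨(f 0).count c, ?_⟩
    have q1 := (hfp 1 0).count_eq c
    have q2 := (hfp 2 0).count_eq c
    have q3 := (hfp 3 0).count_eq c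
    have t0 : W.take s.length = s := by
      rw [← hst]; simp
    have t1 : W.take (s.length + m) = s ++ f 0 := by
      rw [← hst, hu']
      simp only [← List.append_assoc]
      rw [List.append_assoc, List.append_assoc, List.append_assoc]
      exact List.take_left' (by simp [hfl])
    have t2 : W.take (s.length + 2 * m) = s ++ f 0 ++ f 1 := by
      rw [← hst, hu']
      simp only [← List.append_assoc]
      rw [List.append_assoc, List.append_assoc]
      exact List.take_left' (by simp [hfl]; omega)
    have t3 : W.take (s.length + 3 * m) = s ++ f 0 ++ f 1 ++ f 2 := by
      rw [← hst, hu']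
      simp only [← List.append_assoc]
      rw [List.append_assoc]
      exact List.take_left' (by simp [hfl]; omega)
    have t4 : W.take (s.length + 4 * m) = s ++ f 0 ++ f 1 ++ f 2 ++ f 3 := by
      rw [← hst, hu']
      simp only [← List.append_assoc]
      exact List.take_left' (by simp [hfl]; omega)
    rw [t0, t1, t2, t3, t4]
    simp only [List.count_append]
    refine ⟨trivial, ?_, ?_, ?_⟩ <;> linarith [q1, q2, q3]
  have hw2 : w.count 2 = 1 := by
    rw [hw, List.count_append, count_enc2]; simp
  have htake : ∀ i, i < n → w.take i = (v.take i).map enc := by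
    intro i hi
    rw [hw, List.take_append_of_le_length (by simp; omega), List.map_take]
  have h2 : ∀ i, i ≤ k * n → (W.take i).count 2 = i / n := by
    intro i hi
    rw [hW, count_take_rep w 2 (by omega) k i (by rw [hwl]; exact hi), hwl, hw2,
      htake _ (Nat.mod_lt _ hn), count_enc2]
    omega
  have h0 : ∀ i, i ≤ k * n → (W.take i).count 0 = (i / n) * w.count 0 + pc v (i % n) := by
    intro i hi
    rw [hW, count_take_rep w 0 (by omega) k i (by rw [hwl]; exact hi), hwl,
      htake _ (Nat.mod_lt _ hn), count_enc, pc]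
  obtain ⟨d, a1, a2, a3, a4⟩ := hc 2
  obtain ⟨e, b1, b2, b3, b4⟩ := hc 0
  rw [h2 _ (by omega), h2 _ (by omega)] at a1 a2 a3 a4
  rw [h0 _ (by omega), h0 _ (by omega)] at b1 b2 b3 b4
  generalize w.count 0 = C at *
  generalize s.length = p at *
  have g0 := Nat.div_add_mod p n
  have g1 := Nat.div_add_mod (p + m) n
  have g2 := Nat.div_add_mod (p + 2 * m) n
  have g3 := Nat.div_add_mod (p + 3 * m) n
  have g4 := Nat.div_add_mod (p + 4 * m) n
  have r0 := Nat.mod_lt p hn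
  have r1 := Nat.mod_lt (p + m) hn
  have r2 := Nat.mod_lt (p + 2 * m) hn
  have r3 := Nat.mod_lt (p + 3 * m) hn
  have r4 := Nat.mod_lt (p + 4 * m) hn
  rw [a1] at g1 b1
  rw [a2] at g2 b2
  rw [a3] at g3 b3
  rw [a4] at g4 b4
  generalize p / n = g at *
  generalize p % n = x0 at *
  generalize (p + m) % n = x1 at *
  generalize (p + 2 * m) % n = x2 at *
  generalize (p + 3 * m) % n = x3 at *
  generalize (p + 4 * m) % n = x4 at *
  have hd : d < 2 := by
    by_contra hd
    have : n * (g + 2) ≤ n * (g + d) := Nat.mul_le_mul_left _ (by omega)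
    rw [Nat.mul_add] at this
    omega
  clear a1 a2 a3 a4 hc h0 h2 htake
  interval_cases d
  · simp only [Nat.mul_zero, Nat.add_zero] at *
    obtain rfl : x1 = x0 + m := by omega
    obtain rfl : x2 = x0 + 2 * m := by omega
    obtain rfl : x3 = x0 + 3 * m := by omega
    obtain rfl : x4 = x0 + 4 * m := by omega
    exact hv x0 m e hm (by omega) (by omega) (by omega) (by omega) (by omega)
  · simp only [Nat.mul_add, Nat.add_mul, Nat.mul_one, Nat.one_mul] at *
    obtain ⟨D, rfl⟩ : ∃ D, n = m + D := ⟨n - m, by omega⟩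
    obtain rfl : x3 = x4 + D := by omega
    obtain rfl : x2 = x4 + 2 * D := by omega
    obtain rfl : x1 = x4 + 3 * D := by omega
    obtain rfl : x0 = x4 + 4 * D := by omega
    have := pc_mono v x4 D
    exact hv x4 D (C - e) (by omega) (by omega) (by omega) (by omega) (by omega) (by omega)
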